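/- Let K ≥ 1 and let A be a nonempty subset of F_2^n satisfying |A + A| ≤ K·|A|. Then for every real ε > 0, every positive integer t, and every set B ⊆ F_2^n there exists a set X ⊆ F_2^n with the following properties: (1) X is contained in an affine shift of A, i.e. there exists c ∈ F_2^n with X ⊆ c + A; (2) |X| ≥ |A|/(2·K^{t−1}); (3) for every x ∈ X and every nonempty subset S ⊆ F_2^n, Pr_{y∈S}[ ρ_{A→B}(y) − ρ_{A→B}(y + x) ≤ 2ε·√(ρ_{A→B}(y)) ] ≥ 1 − 8·(|A+B|/|S|)·exp(−ε²t/4). -/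

import Mathlib

open scoped Classical Pointwise

/-- The measure of additive containment: `ρ_{A→B}(y) = |{a ∈ A : y + a ∈ B}| / |A|`. -/
noncomputable def rhoMeas {n : ℕ} (A B : Finset (Fin n → ZMod 2)) (y : Fin n → ZMod 2) : ℝ :=
  ((A.filter fun a => y + a ∈ B).card : ℝ) / A.card

/-- `Pr_{y ∈ S}[P y] = |{y ∈ S : P y}| / |S|`. -/
noncomputable def prOver {n : ℕ} (S : Finset (Fin n → ZMod 2))
    (P : (Fin n → ZMod 2) → Prop) : ℝ :=
  ((S.filter fun y => P y).card : ℝ) / S.card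

abbrev VV (n : ℕ) := Fin n → ZMod 2

lemma vv_add_self {n : ℕ} (x : VV n) : x + x = 0 := by
  funext i
  exact CharTwo.add_self_eq_zero (x i)

lemma vv_cancel {n : ℕ} (x y : VV n) : x + (x + y) = y := by
  rw [← add_assoc, vv_add_self, zero_add]

noncomputable def cntN {n t : ℕ} (B : Finset (VV n)) (g : Fin t → VV n) (y : VV n) : ℝ :=
  ∑ i, if y + g i ∈ B then (1 : ℝ) else 0

lemma cntN_nonneg {n t : ℕ} (B : Finset (VV n)) (g : Fin t → VV n) (y : VV n) :
    0 ≤ cntN B g y := Finset.sum_nonneg fun i _ => by split_ifs <;> norm_num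

lemma mem_sumset {n : ℕ} {A B : Finset (VV n)} {y a : VV n} (ha : a ∈ A) (h : y + a ∈ B) :
    y ∈ A + B := by
  rw [Finset.mem_add]
  refine ⟨a, ha, y + a, h, ?_⟩
  rw [add_comm y a, vv_cancel]

lemma cntN_zero {n t : ℕ} {A B : Finset (VV n)} {g : Fin t → VV n} {y : VV n}
    (hg : g ∈ Fintype.piFinset (fun _ : Fin t => A)) (hy : y ∉ A + B) : cntN B g y = 0 := by
  rw [Fintype.mem_piFinset] at hg
  refine Finset.sum_eq_zero fun i _ => if_neg fun h => hy (mem_sumset (hg i) h)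

lemma rho_zero {n : ℕ} {A B : Finset (VV n)} {y : VV n} (hy : y ∉ A + B) :
    rhoMeas A B y = 0 := by
  unfold rhoMeas
  rw [Finset.filter_eq_empty_iff.2]
  · simp
  · intro a ha h
    exact hy (mem_sumset ha h)

lemma rho_nonneg {n : ℕ} (A B : Finset (VV n)) (y : VV n) : 0 ≤ rhoMeas A B y := by
  unfold rhoMeas; positivity

lemma sum_exp_le {n : ℕ} {A : Finset (VV n)} (hA : A.Nonempty) (B : Finset (VV n)) (y : VV n)
    (l : ℝ) (hl : |l| ≤ 1) :
    ∑ a ∈ A, Real.exp (l * if y + a ∈ B then (1 : ℝ) else 0) ≤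
      A.card * Real.exp (rhoMeas A B y * (l + l ^ 2)) := by
  have hc : (0 : ℝ) < A.card := by exact_mod_cast hA.card_pos
  have h1 : ∀ a ∈ A, Real.exp (l * if y + a ∈ B then (1 : ℝ) else 0) ≤
      1 + (l + l ^ 2) * (if y + a ∈ B then (1 : ℝ) else 0) := by
    intro a _
    split_ifs
    · have := (abs_le.1 (Real.abs_exp_sub_one_sub_id_le hl)).2
      simp only [mul_one]; linarith
    · simp
  refine (Finset.sum_le_sum h1).trans ?_
  rw [Finset.sum_add_distrib, ← Finset.mul_sum, Finset.sum_boole]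
  have h2 : ((A.filter fun a => y + a ∈ B).card : ℝ) = A.card * rhoMeas A B y := by
    unfold rhoMeas; field_simp
  rw [h2]
  have h3 := Real.add_one_le_exp (rhoMeas A B y * (l + l ^ 2))
  have h4 := mul_le_mul_of_nonneg_left h3 hc.le
  simp only [Finset.sum_const, nsmul_eq_mul, mul_one]
  linarith

lemma chern {n : ℕ} {A : Finset (VV n)} (hA : A.Nonempty) (B : Finset (VV n)) (y : VV n)
    (t : ℕ) (l c : ℝ) (hl : |l| ≤ 1) :
    (((Fintype.piFinset (fun _ : Fin t => A)).filter fun g => c ≤ l * cntN B g y).card : ℝ) ≤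
      (A.card : ℝ) ^ t * Real.exp (t * (rhoMeas A B y * (l + l ^ 2)) - c) := by
  have h1 : ∑ g ∈ Fintype.piFinset (fun _ : Fin t => A), Real.exp (l * cntN B g y) =
      (∑ a ∈ A, Real.exp (l * if y + a ∈ B then (1 : ℝ) else 0)) ^ t := by
    have := Finset.prod_univ_sum (fun _ : Fin t => A)
      (fun _ a => Real.exp (l * if y + a ∈ B then (1 : ℝ) else 0))
    rw [Finset.prod_const, Finset.card_univ, Fintype.card_fin] at this
    rw [this]
    refine Finset.sum_congr rfl fun g _ => ?_
    rw [← Real.exp_sum, cntN, Finset.mul_sum]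
  have h2 : (((Fintype.piFinset (fun _ : Fin t => A)).filter
        fun g => c ≤ l * cntN B g y).card : ℝ) * Real.exp c ≤
      ∑ g ∈ Fintype.piFinset (fun _ : Fin t => A), Real.exp (l * cntN B g y) := by
    rw [← nsmul_eq_mul]
    refine (Finset.card_nsmul_le_sum _ (fun g => Real.exp (l * cntN B g y)) _ ?_).trans
      (Finset.sum_le_sum_of_subset_of_nonneg (Finset.filter_subset _ _)
        fun _ _ _ => (Real.exp_pos _).le)
    intro g hg
    exact Real.exp_le_exp.2 (Finset.mem_filter.1 hg).2
  rw [h1] at h2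
  have h3 := pow_le_pow_left₀ (Finset.sum_nonneg fun a _ => (Real.exp_pos _).le)
    (sum_exp_le hA B y l hl) t
  rw [mul_pow, ← Real.exp_nat_mul] at h3
  rw [Real.exp_sub, ← mul_div_assoc, le_div_iff₀ (Real.exp_pos _)]
  exact h2.trans h3

lemma lower_tail {n : ℕ} {A : Finset (VV n)} (hA : A.Nonempty) (B : Finset (VV n)) (y : VV n)
    (t : ℕ) (ht : 0 < t) (ε : ℝ) (hε : 0 < ε) :
    (((Fintype.piFinset (fun _ : Fin t => A)).filter fun g =>
      ε * √(rhoMeas A B y) < rhoMeas A B y - cntN B g y / t).card : ℝ) ≤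
      if y ∈ A + B then (A.card : ℝ) ^ t * Real.exp (-(ε ^ 2 * t) / 4) else 0 := by
  have ht' : (0 : ℝ) < t := by exact_mod_cast ht
  split_ifs with hy
  · set p := rhoMeas A B y with hp
    have hp0 : 0 ≤ p := rho_nonneg A B y
    obtain ⟨s, hs⟩ : ∃ s, s = √p := ⟨_, rfl⟩
    have hs0 : 0 ≤ s := hs ▸ Real.sqrt_nonneg _
    have hss : s ^ 2 = p := by rw [hs]; exact Real.sq_sqrt hp0
    rw [← hs]
    by_cases hse : s ≤ ε
    · rw [Finset.filter_eq_empty_iff.2]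
      · simp; positivity
      · intro g _ h
        have := div_nonneg (cntN_nonneg B g y) ht'.le
        nlinarith
    · push Not at hse
      have hspos : 0 < s := hε.trans hse
      have hl : |-(ε / (2 * s))| ≤ 1 := by
        rw [abs_neg, abs_of_pos (by positivity), div_le_one (by positivity)]; linarith
      have := chern hA B y t (-(ε / (2 * s))) (-(ε / (2 * s)) * (t * (p - ε * s))) hl
      refine le_trans ?_ (this.trans_eq ?_)
      · gcongr with g hg
        intro h
        have h2 : cntN B g y / t ≤ p - ε * s := by linarith
        rw [div_le_iff₀ ht'] at h2
        have : 0 < ε / (2 * s) := by positivity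
        nlinarith
      · rw [← hp, ← hss]
        congr 2
        field_simp
        ring
  · rw [Finset.filter_eq_empty_iff.2]
    · simp
    · intro g hg h
      rw [rho_zero hy, cntN_zero hg hy] at h
      simp at h

lemma upper_tail {n : ℕ} {A : Finset (VV n)} (hA : A.Nonempty) (B : Finset (VV n)) (y : VV n)
    (t : ℕ) (ht : 0 < t) (ε : ℝ) (hε : 0 < ε) :
    (((Fintype.piFinset (fun _ : Fin t => A)).filter fun g =>
      rhoMeas A B y + ε * (ε + √(ε ^ 2 + rhoMeas A B y)) ≤ cntN B g y / t).card : ℝ) ≤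
      if y ∈ A + B then (A.card : ℝ) ^ t * Real.exp (-(ε ^ 2 * t) / 4) else 0 := by
  have ht' : (0 : ℝ) < t := by exact_mod_cast ht
  split_ifs with hy
  · set q := rhoMeas A B y with hq
    have hq0 : 0 ≤ q := rho_nonneg A B y
    obtain ⟨r, hr⟩ : ∃ r, r = √(ε ^ 2 + q) := ⟨_, rfl⟩
    have hr0 : 0 ≤ r := hr ▸ Real.sqrt_nonneg _
    have hrr : r ^ 2 = ε ^ 2 + q := by rw [hr]; exact Real.sq_sqrt (by positivity)
    rw [← hr]
    obtain ⟨s, hs⟩ : ∃ s, s = ε + r := ⟨_, rfl⟩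
    rw [← hs]
    have hspos : 0 < s := by linarith
    have hl : |ε / (2 * s)| ≤ 1 := by
      rw [abs_of_pos (by positivity), div_le_one (by positivity)]; linarith
    have := chern hA B y t (ε / (2 * s)) (ε / (2 * s) * (t * (q + ε * s))) hl
    refine le_trans ?_ (this.trans ?_)
    · refine Nat.cast_le.2 (Finset.card_le_card ?_)
      refine Finset.monotone_filter_right _ fun g _ h => ?_
      rw [le_div_iff₀ ht'] at h
      refine mul_le_mul_of_nonneg_left ?_ (by positivity)
      linarith
    · rw [← hq]
      gcongr
      have hqs : q ≤ s ^ 2 := by nlinarith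
      have e1 : t * (q * (ε / (2 * s) + (ε / (2 * s)) ^ 2)) - ε / (2 * s) * (t * (q + ε * s))
          = (ε ^ 2 * t) / 4 * (q / s ^ 2) - ε ^ 2 * t / 2 := by
        field_simp
        ring
      rw [e1]
      have h3 : q / s ^ 2 ≤ 1 := (div_le_one (by positivity)).2 hqs
      have h4 : (ε ^ 2 * t) / 4 * (q / s ^ 2) ≤ (ε ^ 2 * t) / 4 * 1 := by gcongr
      linarith
  · rw [Finset.filter_eq_empty_iff.2]
    · simp
    · intro g hg h
      rw [rho_zero hy, cntN_zero hg hy] at h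
      have := Real.sqrt_nonneg (ε ^ 2 + 0)
      simp only [zero_div, zero_add] at h
      nlinarith

noncomputable def setL {n t : ℕ} (A B : Finset (VV n)) (ε : ℝ) (g : Fin t → VV n) :
    Finset (VV n) :=
  Finset.univ.filter fun y => ε * √(rhoMeas A B y) < rhoMeas A B y - cntN B g y / t

noncomputable def setU {n t : ℕ} (A B : Finset (VV n)) (ε : ℝ) (g : Fin t → VV n) :
    Finset (VV n) :=
  Finset.univ.filter fun y =>
    rhoMeas A B y + ε * (ε + √(ε ^ 2 + rhoMeas A B y)) ≤ cntN B g y / t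

lemma swap_bound {n : ℕ} {T : Type*} (P : Finset T) (C : Finset (VV n)) (R : T → VV n → Prop)
    (M : ℝ) (h : ∀ y, ((P.filter fun g => R g y).card : ℝ) ≤ if y ∈ C then M else 0) :
    ∑ g ∈ P, ((Finset.univ.filter fun y => R g y).card : ℝ) ≤ C.card * M := by
  have h1 : ∑ g ∈ P, ((Finset.univ.filter fun y => R g y).card : ℝ) =
      ∑ y : VV n, ((P.filter fun g => R g y).card : ℝ) := by
    simp only [← Finset.sum_boole]
    exact Finset.sum_comm
  rw [h1]
  refine (Finset.sum_le_sum fun y _ => h y).trans_eq ?_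
  simp

lemma half_good {T : Type*} (P : Finset T) (F : T → ℝ) (M : ℝ) (hF0 : ∀ g, 0 ≤ F g)
    (hM : 0 ≤ M) (h : ∑ g ∈ P, F g ≤ P.card * M) :
    (P.card : ℝ) / 2 ≤ (P.filter fun g => F g ≤ 2 * M).card := by
  by_contra hc
  push Not at hc
  have h1 : ((P.filter fun g => F g ≤ 2 * M).card : ℝ) +
      (P.filter fun g => ¬ F g ≤ 2 * M).card = P.card := by
    exact_mod_cast Finset.card_filter_add_card_filter_not (s := P) (fun g => F g ≤ 2 * M)
  have hne : (P.filter fun g => ¬ F g ≤ 2 * M).Nonempty := by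
    rw [← Finset.card_pos]
    have h0 : (0 : ℝ) ≤ P.card := by positivity
    have : (0 : ℝ) < (P.filter fun g => ¬ F g ≤ 2 * M).card := by linarith
    exact_mod_cast this
  have h2 : ∑ g ∈ P.filter (fun g => ¬ F g ≤ 2 * M), (2 * M) <
      ∑ g ∈ P.filter (fun g => ¬ F g ≤ 2 * M), F g :=
    Finset.sum_lt_sum_of_nonempty hne fun g hg => not_le.1 (Finset.mem_filter.1 hg).2
  have h3 : ∑ g ∈ P.filter (fun g => ¬ F g ≤ 2 * M), F g ≤ ∑ g ∈ P, F g :=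
    Finset.sum_le_sum_of_subset_of_nonneg (Finset.filter_subset _ _) fun g _ _ => hF0 g
  rw [Finset.sum_const, nsmul_eq_mul] at h2
  nlinarith

lemma arith_aux (a s E : ℝ) (hs : 0 < s) : (1 - 8 * (a / s) * E) * s = s - 8 * a * E := by
  field_simp

set_option maxHeartbeats 1000000 in
theorem refined_almost_periodicity_of_sumsets {n : ℕ} (K : ℝ) (hK : 1 ≤ K)
    (A : Finset (Fin n → ZMod 2)) (hA : A.Nonempty)
    (hdoub : ((A + A).card : ℝ) ≤ K * A.card)
    (ε : ℝ) (hε : 0 < ε) (t : ℕ) (ht : 0 < t) (B : Finset (Fin n → ZMod 2)) :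
    ∃ X : Finset (Fin n → ZMod 2),
      (∃ c : Fin n → ZMod 2, X ⊆ A.image (fun a => c + a)) ∧
      (A.card : ℝ) / (2 * K ^ (t - 1)) ≤ X.card ∧
      ∀ x ∈ X, ∀ S : Finset (Fin n → ZMod 2), S.Nonempty →
        1 - 8 * (((A + B).card : ℝ) / S.card) * Real.exp (-(ε ^ 2 * t) / 4) ≤
          prOver S (fun y =>
            rhoMeas A B y - rhoMeas A B (y + x) ≤ 2 * ε * Real.sqrt (rhoMeas A B y)) := by
  obtain ⟨E, hE⟩ : ∃ E, E = Real.exp (-(ε ^ 2 * t) / 4) := ⟨_, rfl⟩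
  have hE0 : 0 < E := hE ▸ Real.exp_pos _
  rw [← hE]
  have hc : (0 : ℝ) < A.card := by exact_mod_cast hA.card_pos
  set P := Fintype.piFinset (fun _ : Fin t => A) with hP
  have hPc : (P.card : ℝ) = (A.card : ℝ) ^ t := by
    rw [hP, Fintype.card_piFinset]; simp
  have hL : ∑ g ∈ P, ((setL A B ε g).card : ℝ) ≤ (A + B).card * ((A.card : ℝ) ^ t * E) := by
    rw [hE]
    exact swap_bound P (A + B) _ _ fun y => lower_tail hA B y t ht ε hε
  have hU : ∑ g ∈ P, ((setU A B ε g).card : ℝ) ≤ (A + B).card * ((A.card : ℝ) ^ t * E) := by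
    rw [hE]
    exact swap_bound P (A + B) _ _ fun y => upper_tail hA B y t ht ε hε
  have hgood := half_good P (fun g => ((setL A B ε g).card : ℝ) + (setU A B ε g).card)
    (2 * (A + B).card * E) (fun g => by positivity) (by positivity) (by
      rw [Finset.sum_add_distrib, hPc]; linarith)
  set G := P.filter fun g => ((setL A B ε g).card : ℝ) + (setU A B ε g).card ≤
    2 * (2 * (A + B).card * E) with hG
  obtain ⟨m, rfl⟩ : ∃ m, t = m + 1 := ⟨t - 1, by omega⟩
  have hmaps : ∀ g ∈ G, (fun i : Fin m => g 0 + g i.succ) ∈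
      Fintype.piFinset (fun _ : Fin m => A + A) := by
    intro g hg
    have hg' := Fintype.mem_piFinset.1 (Finset.mem_filter.1 hg).1
    rw [Fintype.mem_piFinset]
    intro i
    exact Finset.add_mem_add (hg' _) (hg' _)
  have hcardT : ((Fintype.piFinset (fun _ : Fin m => A + A)).card : ℝ) ≤ (K * A.card) ^ m := by
    rw [Fintype.card_piFinset]
    simp only [Finset.prod_const, Finset.card_univ, Fintype.card_fin, Nat.cast_pow]
    gcongr
  have hK0 : 0 < K := by linarith
  obtain ⟨φ, -, hφ⟩ := Finset.exists_le_card_fiber_of_nsmul_le_card_of_maps_to hmaps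
    (Fintype.piFinset_nonempty.2 fun _ => hA.add hA) (b := (A.card : ℝ) / (2 * K ^ m)) (by
      rw [nsmul_eq_mul]
      refine le_trans ?_ hgood
      rw [hPc]
      calc _ ≤ (K * A.card) ^ m * ((A.card : ℝ) / (2 * K ^ m)) := by gcongr
        _ = _ := by rw [mul_pow, pow_succ]; field_simp)
  set H := G.filter fun g => (fun i : Fin m => g 0 + g i.succ) = φ with hH
  have hHpos : H.Nonempty := by
    rw [← Finset.card_pos]
    have : (0 : ℝ) < H.card := lt_of_lt_of_le (by positivity) hφ
    exact_mod_cast this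
  obtain ⟨g, hg⟩ := hHpos
  -- all elements of the fibre are translates of `g`
  have htrans : ∀ g' ∈ H, ∀ i, g' i = g i + (g 0 + g' 0) := by
    intro g' hg' i
    have e1 := (Finset.mem_filter.1 hg').2
    rw [← (Finset.mem_filter.1 hg).2] at e1
    refine Fin.cases ?_ (fun j => ?_) i
    · rw [vv_cancel]
    · have e2 := congrFun e1 j
      have e3 : g' j.succ = g' 0 + (g 0 + g j.succ) := by rw [← e2, vv_cancel]
      rw [e3]; abel
  refine ⟨H.image fun g' => g 0 + g' 0, ⟨g 0, ?_⟩, ?_, ?_⟩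
  · intro x hx
    obtain ⟨g', hg', rfl⟩ := Finset.mem_image.1 hx
    refine Finset.mem_image_of_mem _ ?_
    exact Fintype.mem_piFinset.1 (Finset.mem_filter.1 (Finset.mem_filter.1 hg').1).1 0
  · rw [Finset.card_image_of_injOn]
    · simpa using hφ
    · intro g1 h1 g2 h2 h12
      funext i
      rw [htrans g1 h1 i, htrans g2 h2 i]
      simp only at h12
      rw [h12]
  · intro x hx S hS
    obtain ⟨g', hg', hx'⟩ := Finset.mem_image.1 hx
    have hgG := (Finset.mem_filter.1 (Finset.mem_filter.1 hg).1).2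
    have hgG' := (Finset.mem_filter.1 (Finset.mem_filter.1 hg').1).2
    have hcnt : ∀ y, cntN B g' y = cntN B g (y + x) := by
      intro y
      unfold cntN
      refine Finset.sum_congr rfl fun i _ => ?_
      rw [htrans g' hg' i, ← hx']
      congr 2
      abel
    have hsub : (S.filter fun y => ¬ (rhoMeas A B y - rhoMeas A B (y + x) ≤
        2 * ε * Real.sqrt (rhoMeas A B y))) ⊆
        setL A B ε g' ∪ (setU A B ε g).image (fun z => x + z) := by
      intro y hy
      have hbad := not_le.1 (Finset.mem_filter.1 hy).2
      rw [Finset.mem_union]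
      by_cases hyl : y ∈ setL A B ε g'
      · exact Or.inl hyl
      · right
        refine Finset.mem_image.2 ⟨y + x, ?_, by rw [add_comm y x, vv_cancel]⟩
        simp only [setL, setU, Finset.mem_filter, Finset.mem_univ, true_and, not_lt, hcnt]
          at hyl ⊢
        have hp0 := rho_nonneg A B y
        have hq0 := rho_nonneg A B (y + x)
        have hr0 := Real.sqrt_nonneg (rhoMeas A B y)
        have hrr := Real.sq_sqrt hp0
        generalize √(rhoMeas A B y) = r at *
        have hr1 : 2 * ε < r := by
          by_contra hcon
          push Not at hcon
          nlinarith
        have hr2 : √(ε ^ 2 + rhoMeas A B (y + x)) ≤ r - ε := by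
          rw [Real.sqrt_le_left (by linarith)]
          nlinarith
        have hr3 : ε * (ε + √(ε ^ 2 + rhoMeas A B (y + x))) ≤ ε * r := by
          gcongr; linarith
        linarith
    have hcard : ((S.filter fun y => ¬ (rhoMeas A B y - rhoMeas A B (y + x) ≤
        2 * ε * Real.sqrt (rhoMeas A B y))).card : ℝ) ≤ 8 * (A + B).card * E := by
      have h1 : ((S.filter fun y => ¬ (rhoMeas A B y - rhoMeas A B (y + x) ≤
        2 * ε * Real.sqrt (rhoMeas A B y))).card : ℝ) ≤
          (setL A B ε g').card + (setU A B ε g).card := by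
        have := (Finset.card_le_card hsub).trans ((Finset.card_union_le _ _).trans
          (Nat.add_le_add_left Finset.card_image_le _))
        exact_mod_cast this
      have h2 : (0 : ℝ) ≤ (setU A B ε g').card := Nat.cast_nonneg _
      have h3 : (0 : ℝ) ≤ (setL A B ε g).card := Nat.cast_nonneg _
      linarith
    have hSc : (0 : ℝ) < S.card := by exact_mod_cast hS.card_pos
    have hsplit : ((S.filter fun y => (rhoMeas A B y - rhoMeas A B (y + x) ≤
        2 * ε * Real.sqrt (rhoMeas A B y))).card : ℝ) +
        (S.filter fun y => ¬ (rhoMeas A B y - rhoMeas A B (y + x) ≤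
        2 * ε * Real.sqrt (rhoMeas A B y))).card = S.card := by
      exact_mod_cast Finset.card_filter_add_card_filter_not (s := S) _
    unfold prOver
    rw [le_div_iff₀ hSc]
    have e : (1 - 8 * (((A + B).card : ℝ) / S.card) * E) * S.card =
        S.card - 8 * (A + B).card * E := arith_aux _ _ _ hSc
    rw [e]
    linarith
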